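/- Let f : ℝ² → ℝ be infinitely differentiable with f_x(x,y) > 0 and f_y(x,y) > 0 everywhere, and suppose f satisfies the de Saint Robert equation ∂²/∂x∂y [ log( f_x / f_y ) ] = 0 at every point. Then every point (x₀, y₀) ∈ ℝ² has an open neighborhood V and there exist infinitely differentiable functions U₁, U₂ : ℝ → ℝ with U₁' > 0 and U₂' > 0, and an infinitely differentiable strictly increasing function φ defined on an open interval containing f(V), such that φ(f(x,y)) = U₁(x) + U₂(y) for all (x,y) ∈ V. That is, the preferences represented by f admit a local additively separable representation. -/

import Mathlib

/-!
Write `L = log (f_x / f_y)`. The equation `L_{xy} = 0` splits `L` into a function of `x` plus a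
function of `y` (`eq_add_of_pdx_pdy_eq_zero`), so `f_x / f_y = A(x) / B(y)` with `A`, `B` smooth
and positive. Let `U₁`, `U₂` be primitives of `A`, `B` vanishing at `x₀`, `y₀`. The gradients of
`f` and `U₁ + U₂` are then parallel, hence `f` is constant along the level curves of `U₁ + U₂`
(`eq_of_add_eq`).

Take `V` to be the set where `U₁(x) + U₂(y)` lies in the open interval `U₁(ℝ)`. For `(x, y) ∈ V`
the level curve through `(x, y)` meets the line `y = y₀` at the point `(a, y₀)` with
`U₁(a) = U₁(x) + U₂(y)`, and `f(x, y) = f(a, y₀)`. So `φ = U₁ ∘ g⁻¹` with `g = f(·, y₀)` is the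
required transform; `g⁻¹` is smooth by the inverse function theorem (`exists_smooth_inverse`).
-/

/-- Partial derivative in the first (x) variable. -/
noncomputable def pdx (F : ℝ × ℝ → ℝ) : ℝ × ℝ → ℝ :=
  fun p => deriv (fun a => F (a, p.2)) p.1

/-- Partial derivative in the second (y) variable. -/
noncomputable def pdy (F : ℝ × ℝ → ℝ) : ℝ × ℝ → ℝ :=
  fun p => deriv (fun b => F (p.1, b)) p.2

open Set

lemma exists_smooth_primitive {A : ℝ → ℝ} (hA : ContDiff ℝ (⊤ : ℕ∞) A) (x₀ : ℝ) :
    ∃ U : ℝ → ℝ, ContDiff ℝ (⊤ : ℕ∞) U ∧ U x₀ = 0 ∧ ∀ t, HasDerivAt U (A t) t := by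
  have hd : ∀ t, HasDerivAt (fun x => ∫ s in x₀..x, A s) (A t) t := fun t =>
    (hA.continuous.integral_hasStrictDerivAt x₀ t).hasDerivAt
  refine ⟨fun x => ∫ s in x₀..x, A s, ?_, by simp, hd⟩
  rw [contDiff_infty_iff_deriv]
  refine ⟨fun t => (hd t).differentiableAt, ?_⟩
  rw [show deriv (fun x => ∫ s in x₀..x, A s) = A from funext fun t => (hd t).deriv]
  exact hA

/-- Global one-dimensional inverse function theorem: a smooth function with positive derivative
has open interval range, and a smooth strictly increasing left inverse there. -/
lemma exists_smooth_inverse {h : ℝ → ℝ} (hh : ContDiff ℝ (⊤ : ℕ∞) h)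
    (hpos : ∀ t, 0 < deriv h t) :
    IsOpen (range h) ∧ (range h).OrdConnected ∧ ∃ e : ℝ → ℝ, (∀ t, e (h t) = t) ∧
      ContDiffOn ℝ (⊤ : ℕ∞) e (range h) ∧ StrictMonoOn e (range h) := by
  have hmono : StrictMono h := strictMono_of_deriv_pos hpos
  have hstrict : ∀ t, HasStrictDerivAt h (deriv h t) t := fun t =>
    hh.contDiffAt.hasStrictDerivAt (by simp)
  have hopen : IsOpenMap h := isOpenMap_of_hasStrictDerivAt hstrict fun t => (hpos t).ne'
  have hemb : Topology.IsOpenEmbedding h :=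
    .of_continuous_injective_isOpenMap hh.continuous hmono.injective hopen
  refine ⟨hopen.isOpen_range, (isPreconnected_range hh.continuous).ordConnected,
    (hemb.toOpenPartialHomeomorph h).symm, fun t => hemb.toOpenPartialHomeomorph_left_inv, ?_, ?_⟩
  · rintro _ ⟨t, rfl⟩
    have hl : (hemb.toOpenPartialHomeomorph h).symm (h t) = t :=
      hemb.toOpenPartialHomeomorph_left_inv
    refine ((hemb.toOpenPartialHomeomorph h).contDiffAt_symm_deriv (hpos t).ne' (by simp)
      ?_ ?_).contDiffWithinAt
    · rw [hl]; exact (hstrict t).hasDerivAt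
    · exact hh.contDiffAt
  · rintro _ ⟨s, rfl⟩ _ ⟨t, rfl⟩ hst
    rw [hemb.toOpenPartialHomeomorph_left_inv, hemb.toOpenPartialHomeomorph_left_inv]
    exact hmono.lt_iff_lt.1 hst

lemma fderiv_eq_pd {F : ℝ × ℝ → ℝ} (hF : Differentiable ℝ F) (p : ℝ × ℝ) (a b : ℝ) :
    fderiv ℝ F p (a, b) = a * pdx F p + b * pdy F p := by
  have hx : pdx F p = fderiv ℝ F p (1, 0) :=
    ((hF p).hasFDerivAt.comp_hasDerivAt p.1
      ((hasDerivAt_id p.1).prodMk (hasDerivAt_const p.1 p.2))).deriv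
  have hy : pdy F p = fderiv ℝ F p (0, 1) :=
    ((hF p).hasFDerivAt.comp_hasDerivAt p.2
      ((hasDerivAt_const p.2 p.1).prodMk (hasDerivAt_id p.2))).deriv
  rw [hx, hy, ← smul_eq_mul, ← smul_eq_mul, ← map_smul, ← map_smul, ← map_add]
  simp

lemma hasDerivAt_curve {F : ℝ × ℝ → ℝ} (hF : Differentiable ℝ F) {u v : ℝ → ℝ} {u' v' t : ℝ}
    (hu : HasDerivAt u u' t) (hv : HasDerivAt v v' t) :
    HasDerivAt (fun s => F (u s, v s)) (u' * pdx F (u t, v t) + v' * pdy F (u t, v t)) t := by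
  rw [← fderiv_eq_pd hF]
  exact (hF (u t, v t)).hasFDerivAt.comp_hasDerivAt t (hu.prodMk hv)

lemma contDiff_pdx {F : ℝ × ℝ → ℝ} (hF : ContDiff ℝ (⊤ : ℕ∞) F) :
    ContDiff ℝ (⊤ : ℕ∞) (pdx F) := by
  have h : pdx F = fun p => fderiv ℝ F p (1, 0) := by
    funext p; rw [fderiv_eq_pd (hF.differentiable (by simp))]; ring
  rw [h]
  exact (hF.fderiv_right (by simp)).clm_apply contDiff_const

lemma contDiff_pdy {F : ℝ × ℝ → ℝ} (hF : ContDiff ℝ (⊤ : ℕ∞) F) :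
    ContDiff ℝ (⊤ : ℕ∞) (pdy F) := by
  have h : pdy F = fun p => fderiv ℝ F p (0, 1) := by
    funext p; rw [fderiv_eq_pd (hF.differentiable (by simp))]; ring
  rw [h]
  exact (hF.fderiv_right (by simp)).clm_apply contDiff_const

/-- The wave equation `L_{xy} = 0` on the plane forces `L` to be a sum of functions of one
variable, here normalised at the base point `(x₀, y₀)`. -/
lemma eq_add_of_pdx_pdy_eq_zero {L : ℝ × ℝ → ℝ} (hL : ContDiff ℝ (⊤ : ℕ∞) L)
    (h0 : ∀ p, pdx (pdy L) p = 0) (x₀ y₀ x y : ℝ) :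
    L (x, y) = L (x, y₀) + L (x₀, y) - L (x₀, y₀) := by
  have hLd : Differentiable ℝ L := hL.differentiable (by simp)
  have hLyd : Differentiable ℝ (pdy L) := (contDiff_pdy hL).differentiable (by simp)
  have h1 : ∀ t, pdy L (x, t) = pdy L (x₀, t) := fun t =>
    is_const_of_deriv_eq_zero (f := fun s => pdy L (s, t))
      (hLyd.comp (differentiable_id.prodMk (differentiable_const t))) (fun s => h0 (s, t)) x x₀
  have hv : ∀ s t : ℝ, HasDerivAt (fun t => L (s, t)) (pdy L (s, t)) t := fun s t => by
    simpa using hasDerivAt_curve hLd (hasDerivAt_const t s) (hasDerivAt_id t)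
  have h2 : ∀ t, HasDerivAt (fun t => L (x, t) - L (x₀, t)) 0 t := fun t => by
    have h := (hv x t).sub (hv x₀ t)
    rw [h1 t, sub_self] at h
    exact h
  have h3 : L (x, y) - L (x₀, y) = L (x, y₀) - L (x₀, y₀) :=
    is_const_of_deriv_eq_zero (fun t => (h2 t).differentiableAt)
    (fun t => (h2 t).deriv) y y₀
  linarith

/-- If the gradient of `f` is proportional to `(U₁', U₂')`, then `f` is constant along the curve
`U₁(x) + U₂(y) = U₁(a) + U₂(y₀)`, which is the graph of a function of `y`. -/
lemma eq_of_add_eq {f : ℝ × ℝ → ℝ} (hf : Differentiable ℝ f) {U₁ U₂ A B : ℝ → ℝ}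
    (hU₁ : ContDiff ℝ (⊤ : ℕ∞) U₁)
    (hA : ∀ t, HasDerivAt U₁ (A t) t) (hB : ∀ t, HasDerivAt U₂ (B t) t)
    (hApos : ∀ t, 0 < A t) (hBpos : ∀ t, 0 < B t)
    (hprop : ∀ x y, pdx f (x, y) * B y = pdy f (x, y) * A x)
    {a x y y₀ : ℝ} (hc : U₁ x + U₂ y = U₁ a + U₂ y₀) : f (x, y) = f (a, y₀) := by
  obtain ⟨hJo, hJc, e, he, hes, -⟩ :=
    exists_smooth_inverse hU₁ (fun t => by rw [(hA t).deriv]; exact hApos t)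
  have hU₂m : StrictMono U₂ := strictMono_of_deriv_pos fun t => by
    rw [(hB t).deriv]; exact hBpos t
  have hU₂c : Continuous U₂ := continuous_iff_continuousAt.2 fun t => (hB t).continuousAt
  set c := U₁ a + U₂ y₀ with hcdef
  let T : Set ℝ := {t | c - U₂ t ∈ range U₁}
  have hTo : IsOpen T := hJo.preimage (continuous_const.sub hU₂c)
  have hTc : T.OrdConnected := ⟨fun s hs t ht r hr =>
    hJc.out ht hs ⟨sub_le_sub_left (hU₂m.monotone hr.2) c, sub_le_sub_left (hU₂m.monotone hr.1) c⟩⟩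
  have hk : ∀ t ∈ T, HasDerivAt (fun t => f (e (c - U₂ t), t)) 0 t := by
    rintro t ⟨z, hz⟩
    have hz' : e (c - U₂ t) = z := by rw [← hz, he]
    have hed : HasDerivAt e (A z)⁻¹ (c - U₂ t) := by
      have hd : DifferentiableAt ℝ e (U₁ z) :=
        (hes.contDiffAt (hJo.mem_nhds ⟨z, rfl⟩)).differentiableAt (by simp)
      have h1 := hd.hasDerivAt.comp z (hA z)
      have h2 : e ∘ U₁ = id := funext he
      rw [h2] at h1
      have h3 := h1.unique (hasDerivAt_id z)
      rw [← hz, ← eq_inv_of_mul_eq_one_left h3]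
      exact hd.hasDerivAt
    have hu : HasDerivAt (fun t => e (c - U₂ t)) ((A z)⁻¹ * (-B t)) t :=
      hed.comp t ((hB t).const_sub c)
    have hmain := hasDerivAt_curve hf hu (hasDerivAt_id t)
    simp only [id, hz'] at hmain
    convert hmain using 1
    have := hprop z t
    have := (hApos z).ne'
    field_simp
    linarith
  have hconst := hTo.is_const_of_deriv_eq_zero hTc.isPreconnected
    (fun t ht => (hk t ht).differentiableAt.differentiableWithinAt)
    (fun t ht => (hk t ht).deriv)
    (show y ∈ T from ⟨x, by linarith⟩) (show y₀ ∈ T from ⟨a, by linarith⟩)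
  have e1 : c - U₂ y = U₁ x := by linarith
  have e2 : c - U₂ y₀ = U₁ a := by linarith
  simpa only [e1, e2, he] using hconst

/-- If `f : ℝ² → ℝ` is smooth with `f_x > 0` and `f_y > 0` everywhere and satisfies
the de Saint Robert equation `(log (f_x / f_y))_{xy} = 0`, then near every point some
strictly increasing smooth transform `φ` of `f` is additively separable:
`φ(f(x,y)) = U₁(x) + U₂(y)` with `U₁, U₂` smooth and strictly increasing
(positive derivative). -/
theorem de_saint_robert_implies_local_additive_separability
    (f : ℝ × ℝ → ℝ) (hf : ContDiff ℝ (⊤ : ℕ∞) f)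
    (hfx : ∀ p : ℝ × ℝ, 0 < pdx f p) (hfy : ∀ p : ℝ × ℝ, 0 < pdy f p)
    (hdsr : ∀ p : ℝ × ℝ, pdx (pdy (fun q => Real.log (pdx f q / pdy f q))) p = 0) :
    ∀ x₀ y₀ : ℝ, ∃ V : Set (ℝ × ℝ), IsOpen V ∧ (x₀, y₀) ∈ V ∧
      ∃ U₁ U₂ : ℝ → ℝ, ContDiff ℝ (⊤ : ℕ∞) U₁ ∧ ContDiff ℝ (⊤ : ℕ∞) U₂ ∧
        (∀ t : ℝ, 0 < deriv U₁ t) ∧ (∀ t : ℝ, 0 < deriv U₂ t) ∧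
        ∃ (I : Set ℝ) (φ : ℝ → ℝ), IsOpen I ∧ I.OrdConnected ∧ f '' V ⊆ I ∧
          ContDiffOn ℝ (⊤ : ℕ∞) φ I ∧ StrictMonoOn φ I ∧
          ∀ x y : ℝ, (x, y) ∈ V → φ (f (x, y)) = U₁ x + U₂ y := by
  intro x₀ y₀
  have hfd : Differentiable ℝ f := hf.differentiable (by simp)
  set L : ℝ × ℝ → ℝ := fun q => Real.log (pdx f q / pdy f q) with hLdef
  have hL : ContDiff ℝ (⊤ : ℕ∞) L :=
    ((contDiff_pdx hf).div (contDiff_pdy hf) fun p => (hfy p).ne').log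
      fun p => (div_pos (hfx p) (hfy p)).ne'
  have hsum := eq_add_of_pdx_pdy_eq_zero hL hdsr x₀ y₀
  have hA : ContDiff ℝ (⊤ : ℕ∞) (fun x => Real.exp (L (x, y₀))) :=
    (hL.comp (contDiff_id.prodMk contDiff_const)).exp
  have hB : ContDiff ℝ (⊤ : ℕ∞) (fun y => Real.exp (L (x₀, y₀) - L (x₀, y))) :=
    (contDiff_const.sub (hL.comp (contDiff_const.prodMk contDiff_id))).exp
  obtain ⟨U₁, hU₁, hU₁0, hU₁d⟩ := exists_smooth_primitive hA x₀
  obtain ⟨U₂, hU₂, hU₂0, hU₂d⟩ := exists_smooth_primitive hB y₀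
  have hU₁p : ∀ t, 0 < deriv U₁ t := fun t => by
    rw [(hU₁d t).deriv]; exact Real.exp_pos _
  have hU₂p : ∀ t, 0 < deriv U₂ t := fun t => by
    rw [(hU₂d t).deriv]; exact Real.exp_pos _
  have hprop : ∀ x y, pdx f (x, y) * Real.exp (L (x₀, y₀) - L (x₀, y)) =
      pdy f (x, y) * Real.exp (L (x, y₀)) := fun x y => by
    have h1 : Real.exp (L (x, y)) = pdx f (x, y) / pdy f (x, y) :=
      Real.exp_log (div_pos (hfx _) (hfy _))
    have h2 : L (x, y₀) = L (x, y) + (L (x₀, y₀) - L (x₀, y)) := by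
      rw [hsum x y]; ring
    rw [h2, Real.exp_add, h1]
    have := (hfy (x, y)).ne'
    field_simp
  have hg : ContDiff ℝ (⊤ : ℕ∞) (fun x => f (x, y₀)) :=
    hf.comp (contDiff_id.prodMk contDiff_const)
  obtain ⟨hIo, hIc, e, he, hes, hem⟩ := exists_smooth_inverse hg fun t => hfx (t, y₀)
  have hU₁m : StrictMono U₁ := strictMono_of_deriv_pos hU₁p
  obtain ⟨hJo, -⟩ := exists_smooth_inverse hU₁ hU₁p
  -- On `V`, each level curve of `U₁ + U₂` meets the horizontal line `y = y₀`.
  have hlevel : ∀ x y, U₁ x + U₂ y ∈ range U₁ →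
      ∃ a, U₁ a = U₁ x + U₂ y ∧ f (x, y) = f (a, y₀) := by
    rintro x y ⟨a, ha⟩
    exact ⟨a, ha, eq_of_add_eq hfd hU₁ hU₁d hU₂d (fun _ => Real.exp_pos _)
      (fun _ => Real.exp_pos _) hprop (by rw [ha, hU₂0, add_zero])⟩
  refine ⟨{p | U₁ p.1 + U₂ p.2 ∈ range U₁}, ?_, ⟨x₀, by simp [hU₂0]⟩, U₁, U₂, hU₁, hU₂, hU₁p, hU₂p,
    range fun x => f (x, y₀), U₁ ∘ e, hIo, hIc, ?_, hU₁.comp_contDiffOn hes,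
    hU₁m.comp_strictMonoOn hem, ?_⟩
  · exact hJo.preimage ((hU₁.continuous.comp continuous_fst).add
      (hU₂.continuous.comp continuous_snd))
  · rintro _ ⟨⟨x, y⟩, hp, rfl⟩
    obtain ⟨a, -, ha⟩ := hlevel x y hp
    exact ⟨a, ha.symm⟩
  · intro x y hp
    obtain ⟨a, ha, hfa⟩ := hlevel x y hp
    rw [Function.comp_apply, hfa, he a, ha]
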